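/- arXiv:2603.18452 — 7 statements merged into one kernel-verified Lean document; each statement's English description precedes it below -/
import Mathlib

section
/- For every i ∈ {1,…,n}, the expected degree of node V_i under the Pólya joint law equals nρ: Σ_{z ∈ {0,1}^n} p(z) · deg_i(z) = n·ρ. -/
open Finset

/-- The Pólya joint law on binary `n`-tuples. -/
noncomputable def polyaP (n : ℕ) (R B Δ : ℝ) (z : Fin n → Fin 2) : ℝ :=
  (∏ i ∈ Finset.range (∑ t, (z t : ℕ)), (R + i * Δ)) *
    (∏ j ∈ Finset.range (n - ∑ t, (z t : ℕ)), (B + j * Δ)) /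
    ∏ m ∈ Finset.range n, (R + B + m * Δ)

/-- The degree of node `V_i` (here `i : Fin n` represents the paper's node `i+1`,
so the paper's `deg(V_i) = i·z_i + Σ_{j=i+1}^n z_j`). -/
def degNode (n : ℕ) (i : Fin n) (z : Fin n → Fin 2) : ℕ :=
  ((i : ℕ) + 1) * (z i : ℕ) + ∑ j ∈ Finset.univ.filter (fun j => i < j), (z j : ℕ)

/-- The unnormalized weight. -/
noncomputable def polyaN (n : ℕ) (R B Δ : ℝ) (z : Fin n → Fin 2) : ℝ :=
  (∏ i ∈ Finset.range (∑ t, (z t : ℕ)), (R + i * Δ)) *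
    (∏ j ∈ Finset.range (n - ∑ t, (z t : ℕ)), (B + j * Δ))

lemma polya_shift (k : ℕ) (R Δ : ℝ) :
    ∏ i ∈ Finset.range (k + 1), (R + i * Δ) =
      R * ∏ i ∈ Finset.range k, ((R + Δ) + i * Δ) := by
  rw [Finset.prod_range_succ', mul_comm]
  congr 1
  · simp
  · refine Finset.prod_congr rfl fun i _ => ?_
    push_cast
    ring

lemma polya_count_le (n : ℕ) (z : Fin n → Fin 2) : ∑ t, (z t : ℕ) ≤ n := by
  calc ∑ t, (z t : ℕ) ≤ ∑ _t : Fin n, 1 := Finset.sum_le_sum fun t _ => by omega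
    _ = n := by simp

lemma polya_split (n : ℕ) (j : Fin (n + 1)) (f : (Fin (n + 1) → Fin 2) → ℝ) :
    ∑ z, f z = ∑ w : Fin n → Fin 2, f (j.insertNth (α := fun _ => Fin 2) 0 w) +
      ∑ w : Fin n → Fin 2, f (j.insertNth (α := fun _ => Fin 2) 1 w) := by
  rw [← (Fin.insertNthEquiv (fun _ => Fin 2) j).sum_comp, Fintype.sum_prod_type, Fin.sum_univ_two]
  rfl

lemma polyaN_one (n : ℕ) (R B Δ : ℝ) (j : Fin (n + 1)) (w : Fin n → Fin 2) :
    polyaN (n + 1) R B Δ (j.insertNth (α := fun _ => Fin 2) 1 w) =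
      R * polyaN n (R + Δ) B Δ w := by
  have h : ∑ t, ((j.insertNth (α := fun _ => Fin 2) 1 w t : Fin 2) : ℕ)
      = (∑ t, (w t : ℕ)) + 1 := by
    rw [Fin.sum_univ_succAbove _ j]
    simp [add_comm]
  unfold polyaN
  rw [h, polya_shift, Nat.add_sub_add_right, mul_assoc]

lemma polyaN_zero (n : ℕ) (R B Δ : ℝ) (j : Fin (n + 1)) (w : Fin n → Fin 2) :
    polyaN (n + 1) R B Δ (j.insertNth (α := fun _ => Fin 2) 0 w) =
      B * polyaN n R (B + Δ) Δ w := by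
  have h : ∑ t, ((j.insertNth (α := fun _ => Fin 2) 0 w t : Fin 2) : ℕ)
      = ∑ t, (w t : ℕ) := by
    rw [Fin.sum_univ_succAbove _ j]
    simp
  have h2 := polya_count_le n w
  unfold polyaN
  rw [h, Nat.sub_add_comm h2, polya_shift]
  ring

lemma polyaN_sum (n : ℕ) : ∀ (R B Δ : ℝ),
    ∑ z, polyaN n R B Δ z = ∏ m ∈ Finset.range n, (R + B + m * Δ) := by
  induction n with
  | zero => intro R B Δ; simp [polyaN]
  | succ n ih =>
    intro R B Δ
    rw [polya_split n 0]
    simp only [polyaN_one, polyaN_zero]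
    rw [← Finset.mul_sum, ← Finset.mul_sum, ih, ih, polya_shift,
      show R + (B + Δ) = R + B + Δ by ring, show R + Δ + B = R + B + Δ by ring]
    ring

lemma polyaP_marginal (n : ℕ) (R B Δ : ℝ) (hR : 0 < R) (hB : 0 < B) (hΔ : 0 < Δ) (j : Fin n) :
    ∑ z : Fin n → Fin 2, polyaP n R B Δ z * ((z j : ℕ) : ℝ) = R / (R + B) := by
  obtain _ | n := n
  · exact j.elim0
  have hp : ∀ z, polyaP (n + 1) R B Δ z =
    polyaN (n + 1) R B Δ z / ∏ m ∈ Finset.range (n + 1), (R + B + m * Δ) := fun z => rfl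
  rw [polya_split n j]
  simp only [hp, polyaN_one, polyaN_zero, Fin.insertNth_apply_same]
  simp only [Fin.val_zero, Fin.val_one, Nat.cast_zero, Nat.cast_one, mul_zero, mul_one,
    Finset.sum_const_zero, zero_add]
  rw [← Finset.sum_div, ← Finset.mul_sum, polyaN_sum, polya_shift,
    show R + Δ + B = R + B + Δ by ring]
  have : ∏ m ∈ Finset.range n, (R + B + Δ + m * Δ) ≠ 0 :=
    Finset.prod_ne_zero_iff.mpr fun m _ => by positivity
  exact mul_div_mul_right _ _ this

/-- The expected degree of any node `V_i` under the Pólya joint law equals `n·ρ`. -/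
theorem polyaP_expected_degree (n : ℕ) (hn : 1 ≤ n) (R B Δ : ℝ)
    (hR : 0 < R) (hB : 0 < B) (hΔ : 0 < Δ) (ρ : ℝ) (hρ : ρ = R / (R + B)) (i : Fin n) :
    ∑ z : Fin n → Fin 2, polyaP n R B Δ z * (degNode n i z : ℝ) = n * ρ := by
  have hm := fun j => polyaP_marginal n R B Δ hR hB hΔ j
  rw [← hρ] at hm
  have h1 : ∀ z : Fin n → Fin 2, polyaP n R B Δ z * (degNode n i z : ℝ) =
      ((i : ℕ) + 1 : ℝ) * (polyaP n R B Δ z * ((z i : ℕ) : ℝ)) +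
      ∑ j ∈ Finset.univ.filter (fun j => i < j), polyaP n R B Δ z * ((z j : ℕ) : ℝ) := by
    intro z
    unfold degNode
    push_cast
    rw [← Finset.mul_sum]
    ring
  simp only [h1]
  rw [Finset.sum_add_distrib, ← Finset.mul_sum, hm, Finset.sum_comm]
  simp only [hm]
  rw [Finset.sum_const, nsmul_eq_mul]
  have hc : (Finset.univ.filter (fun j => i < j)).card + (i + 1) = n := by
    rw [Finset.filter_lt_eq_Ioi, Fin.card_Ioi]
    omega
  have hc' : ((Finset.univ.filter (fun j => i < j)).card : ℝ) + ((i : ℕ) + 1) = n := by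
    exact_mod_cast hc
  rw [← hc']
  ring
end

section
/- For every i ∈ {1,…,n}, the second moment of the degree of node V_i under the Pólya joint law satisfies Σ_{z ∈ {0,1}^n} p(z)·deg_i(z)² = (1 + 2i/(1/δ + n − i)) · [(n−i)·ρ·((n−i)(δ+ρ) + 1 − ρ)/(1+δ)] + i²·ρ + 2i·ρ²·(n−i)/(1 + nδ − iδ). -/
open Finset

/-- First-step decomposition when the first draw is red. -/
lemma polyaP_cons_one (n : ℕ) (R B Δ : ℝ) (z : Fin n → Fin 2) :
    polyaP (n + 1) R B Δ (Fin.cons 1 z) = R / (R + B) * polyaP n (R + Δ) B Δ z := by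
  unfold polyaP
  have h : ∑ t, ((Fin.cons 1 z : Fin (n + 1) → Fin 2) t : ℕ) = (∑ t, (z t : ℕ)) + 1 := by
    rw [Fin.sum_univ_succ]; simp [add_comm]
  rw [h, Finset.prod_range_succ', Finset.prod_range_succ' _ n, Nat.add_sub_add_right]
  have h1 : ∀ k : ℕ, R + ((k + 1 : ℕ) : ℝ) * Δ = R + Δ + k * Δ := by
    intro k; push_cast; ring
  have h2 : ∀ k : ℕ, R + B + ((k + 1 : ℕ) : ℝ) * Δ = R + Δ + B + k * Δ := by
    intro k; push_cast; ring
  simp only [h1, h2, Nat.cast_zero, zero_mul, add_zero]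
  rw [div_mul_div_comm]
  congr 1 <;> ring

/-- First-step decomposition when the first draw is black. -/
lemma polyaP_cons_zero (n : ℕ) (R B Δ : ℝ) (z : Fin n → Fin 2) :
    polyaP (n + 1) R B Δ (Fin.cons 0 z) = B / (R + B) * polyaP n R (B + Δ) Δ z := by
  unfold polyaP
  have h : ∑ t, ((Fin.cons 0 z : Fin (n + 1) → Fin 2) t : ℕ) = (∑ t, (z t : ℕ)) := by
    rw [Fin.sum_univ_succ]; simp
  have hle : ∑ t, (z t : ℕ) ≤ n := by
    calc ∑ t, (z t : ℕ) ≤ ∑ _t : Fin n, 1 := Finset.sum_le_sum (fun t _ => by omega)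
      _ = n := by simp
  rw [h, Nat.sub_add_comm hle, Finset.prod_range_succ' _ n, Finset.prod_range_succ' _ (n - _)]
  have h1 : ∀ k : ℕ, B + ((k + 1 : ℕ) : ℝ) * Δ = B + Δ + k * Δ := by
    intro k; push_cast; ring
  have h2 : ∀ k : ℕ, R + B + ((k + 1 : ℕ) : ℝ) * Δ = R + (B + Δ) + k * Δ := by
    intro k; push_cast; ring
  simp only [h1, h2, Nat.cast_zero, zero_mul, add_zero]
  rw [div_mul_div_comm]
  congr 1 <;> ring

lemma sum_fin_two_succ (n : ℕ) (F : (Fin (n + 1) → Fin 2) → ℝ) :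
    ∑ z, F z = ∑ z : Fin n → Fin 2, F (Fin.cons 0 z) + ∑ z : Fin n → Fin 2, F (Fin.cons 1 z) := by
  rw [← (Fin.consEquiv (fun _ : Fin (n + 1) => Fin 2)).sum_comp, Fintype.sum_prod_type,
    Fin.sum_univ_two]
  rfl

lemma polyaP_total (n : ℕ) (R B Δ : ℝ) (hR : 0 < R) (hB : 0 < B) (hΔ : 0 < Δ) :
    ∑ z : Fin n → Fin 2, polyaP n R B Δ z = 1 := by
  induction n generalizing R B with
  | zero => simp [polyaP]
  | succ n ih =>
    rw [sum_fin_two_succ]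
    simp only [polyaP_cons_zero, polyaP_cons_one, ← Finset.mul_sum]
    rw [ih _ _ hR (by positivity), ih _ _ (by positivity) hB]
    field_simp
    ring

lemma polyaP_first (n : ℕ) (R B Δ : ℝ) (hR : 0 < R) (hB : 0 < B) (hΔ : 0 < Δ) (a : Fin n → ℝ) :
    ∑ z : Fin n → Fin 2, polyaP n R B Δ z * (∑ j, a j * ((z j : ℕ) : ℝ)) =
      R / (R + B) * ∑ j, a j := by
  induction n generalizing R B with
  | zero => simp
  | succ n ih =>
    rw [sum_fin_two_succ]
    simp only [polyaP_cons_zero, polyaP_cons_one, Fin.sum_univ_succ, Fin.cons_zero, Fin.cons_succ,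
      mul_add, Finset.sum_add_distrib, mul_assoc, ← Finset.mul_sum]
    simp only [← Finset.sum_mul]
    rw [ih _ _ hR (by positivity), ih _ _ (by positivity) hB, polyaP_total _ _ _ _ (by positivity) hB hΔ]
    simp
    field_simp
    ring

lemma polyaP_second (n : ℕ) (R B Δ : ℝ) (hR : 0 < R) (hB : 0 < B) (hΔ : 0 < Δ) (a : Fin n → ℝ) :
    ∑ z : Fin n → Fin 2, polyaP n R B Δ z * (∑ j, a j * ((z j : ℕ) : ℝ)) ^ 2 =
      R * B / ((R + B) * (R + B + Δ)) * ∑ j, a j ^ 2 +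
      R * (R + Δ) / ((R + B) * (R + B + Δ)) * (∑ j, a j) ^ 2 := by
  induction n generalizing R B with
  | zero => simp
  | succ n ih =>
    have e0 := ih R (B + Δ) hR (by positivity) (Fin.tail a)
    have e1 := ih (R + Δ) B (by positivity) hB (Fin.tail a)
    have f1 := polyaP_first n (R + Δ) B Δ (by positivity) hB hΔ (Fin.tail a)
    have t1 := polyaP_total n (R + Δ) B Δ (by positivity) hB hΔ
    simp only [Fin.tail] at e0 e1 f1
    rw [sum_fin_two_succ]
    simp only [polyaP_cons_zero, polyaP_cons_one, Fin.sum_univ_succ, Fin.cons_zero, Fin.cons_succ,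
      mul_assoc, ← Finset.mul_sum]
    have k0 : ∑ z : Fin n → Fin 2, polyaP n R (B + Δ) Δ z *
        (a 0 * (((0 : Fin 2) : ℕ) : ℝ) + ∑ j : Fin n, a j.succ * ((z j : ℕ) : ℝ)) ^ 2 =
        ∑ z : Fin n → Fin 2, polyaP n R (B + Δ) Δ z *
          (∑ j : Fin n, a j.succ * ((z j : ℕ) : ℝ)) ^ 2 := by simp
    have k1 : ∑ z : Fin n → Fin 2, polyaP n (R + Δ) B Δ z *
        (a 0 * (((1 : Fin 2) : ℕ) : ℝ) + ∑ j : Fin n, a j.succ * ((z j : ℕ) : ℝ)) ^ 2 =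
        a 0 ^ 2 * ∑ z : Fin n → Fin 2, polyaP n (R + Δ) B Δ z +
        2 * a 0 * ∑ z : Fin n → Fin 2, polyaP n (R + Δ) B Δ z *
          (∑ j : Fin n, a j.succ * ((z j : ℕ) : ℝ)) +
        ∑ z : Fin n → Fin 2, polyaP n (R + Δ) B Δ z *
          (∑ j : Fin n, a j.succ * ((z j : ℕ) : ℝ)) ^ 2 := by
      rw [Finset.mul_sum, Finset.mul_sum, ← Finset.sum_add_distrib, ← Finset.sum_add_distrib]
      refine Finset.sum_congr rfl fun z _ => ?_
      simp only [Fin.val_one, Nat.cast_one]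
      ring
    rw [k0, k1, e0, e1, f1, t1]
    generalize ∑ j : Fin n, a j.succ = S
    generalize ∑ j : Fin n, a j.succ ^ 2 = Q
    generalize a 0 = x
    have n1 : R + B ≠ 0 := by positivity
    have n2 : R + B + Δ ≠ 0 := by positivity
    have n3 : R + B + 2 * Δ ≠ 0 := by positivity
    rw [show R + (B + Δ) = R + B + Δ by ring, show R + Δ + B = R + B + Δ by ring,
      show R + B + Δ + Δ = R + B + 2 * Δ by ring]
    field_simp
    ring

lemma degNode_eq (n : ℕ) (i : Fin n) (z : Fin n → Fin 2) :
    (degNode n i z : ℝ) = ∑ j, ((if j = i then ((i : ℕ) + 1 : ℝ) else 0) +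
      (if i < j then 1 else 0)) * ((z j : ℕ) : ℝ) := by
  simp [degNode, add_mul, Finset.sum_add_distrib, Finset.sum_filter, ite_mul]

/-- The second moment of the degree of node `V_i` under the Pólya joint law. -/
theorem polyaP_degree_second_moment (n : ℕ) (hn : 1 ≤ n) (R B Δ : ℝ)
    (hR : 0 < R) (hB : 0 < B) (hΔ : 0 < Δ) (ρ δ : ℝ)
    (hρ : ρ = R / (R + B)) (hδ : δ = Δ / (R + B)) (i : Fin n) :
    ∑ z : Fin n → Fin 2, polyaP n R B Δ z * (degNode n i z : ℝ) ^ 2 =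
      (1 + 2 * ((i : ℕ) + 1 : ℝ) / (1 / δ + n - ((i : ℕ) + 1 : ℝ))) *
          ((n - ((i : ℕ) + 1 : ℝ)) * ρ *
              ((n - ((i : ℕ) + 1 : ℝ)) * (δ + ρ) + 1 - ρ) / (1 + δ)) +
        ((i : ℕ) + 1 : ℝ) ^ 2 * ρ +
        2 * ((i : ℕ) + 1 : ℝ) * ρ ^ 2 * (n - ((i : ℕ) + 1 : ℝ)) /
          (1 + n * δ - ((i : ℕ) + 1 : ℝ) * δ) := by

  have hi : ((i : ℕ) : ℝ) + 1 ≤ n := by exact_mod_cast i.isLt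
  have hc : ∑ j : Fin n, (if i < j then (1 : ℝ) else 0) = n - ((i : ℕ) + 1 : ℝ) := by
    have hcard : (Finset.univ.filter (fun j => i < j)).card = n - ((i : ℕ) + 1) := by
      rw [Finset.filter_lt_eq_Ioi, Fin.card_Ioi]; omega
    rw [Finset.sum_boole, hcard, Nat.cast_sub i.isLt]
    push_cast; ring
  have s1 : ∑ j : Fin n, ((if j = i then ((i : ℕ) + 1 : ℝ) else 0) + (if i < j then 1 else 0)) =
      n := by
    rw [Finset.sum_add_distrib, hc]; simp
  have s2 : ∑ j : Fin n,
      ((if j = i then ((i : ℕ) + 1 : ℝ) else 0) + (if i < j then 1 else 0)) ^ 2 =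
      ((i : ℕ) + 1 : ℝ) ^ 2 + (n - ((i : ℕ) + 1 : ℝ)) := by
    rw [← hc]
    have : ∀ j : Fin n,
        ((if j = i then ((i : ℕ) + 1 : ℝ) else 0) + (if i < j then 1 else 0)) ^ 2 =
        (if j = i then ((i : ℕ) + 1 : ℝ) ^ 2 else 0) + (if i < j then 1 else 0) := by
      intro j
      by_cases h : j = i
      · subst h; simp
      · by_cases h' : i < j <;> simp [h, h']
    simp only [this, Finset.sum_add_distrib]
    simp
  simp only [degNode_eq]
  rw [polyaP_second n R B Δ hR hB hΔ, s1, s2]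
  obtain ⟨m, hm⟩ : ∃ m : ℝ, m = n - ((i : ℕ) + 1 : ℝ) := ⟨_, rfl⟩
  have hm0 : 0 ≤ m := by linarith
  generalize ((i : ℕ) + 1 : ℝ) = I at *
  have hn' : (n : ℝ) = I + m := by linarith
  rw [hn', hρ, hδ]
  have n1 : R + B ≠ 0 := by positivity
  have n2 : R + B + Δ ≠ 0 := by positivity
  have n3 : R + B + m * Δ ≠ 0 := by positivity
  have d1 : 1 / (Δ / (R + B)) + (I + m) - I = (R + B + m * Δ) / Δ := by field_simp; ring
  have d2 : 1 + (I + m) * (Δ / (R + B)) - I * (Δ / (R + B)) = (R + B + m * Δ) / (R + B) := by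
    field_simp; ring
  have d3 : 1 + Δ / (R + B) = (R + B + Δ) / (R + B) := by field_simp
  rw [d1, d2, d3, add_sub_cancel_left]
  field_simp
  ring
end

section
/- Let E be a symmetric relation on {1,…,n} (loops allowed). Then there exist a weight function Φ : {1,…,n} → ℝ and a real number τ > 0 such that for all i, j (including i = j), E(i,j) holds if and only if Φ(i) + Φ(j) > τ, if and only if there exist a bijection σ of {1,…,n} and a binary n-tuple z ∈ {0,1}^n such that for all i, j, E(σ(i), σ(j)) holds if and only if z_{max(i,j)} = 1. -/
/-- A symmetric relation on `{1,…,n}` (loops allowed) is a threshold graph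
(there exist weights `Φ` and a threshold `τ > 0` with `E i j ↔ Φ i + Φ j > τ`)
if and only if, up to node relabeling, it is obtained by the sequential
universal/isolated-node construction from a binary `n`-tuple `z`,
i.e. `E (σ i) (σ j) ↔ z_{max(i,j)} = 1`. -/
theorem thresholdGraph_iff_sequential (n : ℕ) (E : Fin n → Fin n → Prop)
    (hsym : ∀ i j, E i j → E j i) :
    (∃ (Φ : Fin n → ℝ) (τ : ℝ), 0 < τ ∧ ∀ i j, E i j ↔ Φ i + Φ j > τ) ↔
      (∃ (σ : Equiv.Perm (Fin n)) (z : Fin n → Fin 2),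
        ∀ i j, E (σ i) (σ j) ↔ z (max i j) = 1) := by
  constructor
  · rintro ⟨Φ, τ, hτ, h⟩
    let f : Fin n → ℝ ×ₗ ℝ := fun i => toLex (|Φ i - τ / 2|, -(Φ i - τ / 2))
    have hm := Tuple.monotone_sort f
    classical
    refine ⟨Tuple.sort f, fun i => if Φ (Tuple.sort f i) - τ / 2 > 0 then 1 else 0, ?_⟩
    have key : ∀ i j, i ≤ j → (E (Tuple.sort f i) (Tuple.sort f j) ↔
        Φ (Tuple.sort f j) - τ / 2 > 0) := by
      intro i j hij
      have h1 := hm hij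
      rw [h]
      simp only [Function.comp, f, Prod.Lex.toLex_le_toLex] at h1
      generalize Tuple.sort f j = b at *
      generalize Tuple.sort f i = a at *
      rcases abs_cases (Φ a - τ / 2) with ⟨h2, h3⟩ | ⟨h2, h3⟩ <;>
      rcases abs_cases (Φ b - τ / 2) with ⟨h4, h5⟩ | ⟨h4, h5⟩ <;>
      rw [h2, h4] at h1 <;>
      rcases h1 with h1 | ⟨h1, h6⟩ <;>
      constructor <;> intro h7 <;> linarith
    intro i j
    rcases le_total i j with hij | hij
    · rw [key i j hij, max_eq_right hij]
      simp
    · rw [max_eq_left hij, show E (Tuple.sort f i) (Tuple.sort f j) ↔ _ from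
        ⟨hsym _ _, hsym _ _⟩, key j i hij]
      simp
  · rintro ⟨σ, z, h⟩
    classical
    let g : Fin n → ℝ := fun i => if z i = 1 then (i : ℝ) + 1 else -((i : ℝ) + 1)
    refine ⟨fun k => 1 / 2 + g (σ.symm k), 1, one_pos, ?_⟩
    have key : ∀ i j : Fin n, i ≤ j → (z j = 1 ↔ g i + g j > 0) := by
      intro i j hij
      rcases hij.eq_or_lt with rfl | hlt
      · have h0 : (0 : ℝ) ≤ (i : ℝ) := Nat.cast_nonneg _
        by_cases hz : z i = 1 <;> simp only [g, hz, if_true, if_false, true_iff, false_iff] <;>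
          linarith
      · have h0 : (0 : ℝ) ≤ (i : ℝ) := Nat.cast_nonneg _
        have h1 : (i : ℝ) < (j : ℝ) := by exact_mod_cast hlt
        by_cases hz : z j = 1 <;> by_cases hy : z i = 1 <;>
          simp only [g, hz, hy, if_true, if_false, true_iff, false_iff] <;> linarith
    intro i j
    have h1 := h (σ.symm i) (σ.symm j)
    simp only [Equiv.apply_symm_apply] at h1
    rw [h1]
    rcases le_total (σ.symm i) (σ.symm j) with hij | hij
    · rw [max_eq_right hij, key _ _ hij]
      constructor <;> intro h7 <;> linarith
    · rw [max_eq_left hij, key _ _ hij]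
      constructor <;> intro h7 <;> linarith
end

section
/- For every i ∈ {1,…,n}, the expected decay centrality of node V_i under the Pólya joint law is Σ_{z ∈ {0,1}^n} p(z)·C_i(z) = Σ_{j=1, j≠i}^{n} [ρ/4 + (1/4)·(1 − ∏_{s=0}^{n−max(i,j)} (1 − ρ + sδ)/(1 + sδ))] + ρ. -/
open Finset

/-- Decay centrality (with parameter `1/2`) of node `V_i` in the threshold graph of `z`:
`C_i(z) = Σ_j (1/2)^{d(i,j)}` with `(1/2)^∞ = 0`. Explicitly, the summand for `j ≠ i`
is `1/2` if `z_{max(i,j)} = 1`, `1/4` if `z_{max(i,j)} = 0` and some later node is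
universal, and `0` otherwise; the `j = i` summand equals `z_i`. -/
noncomputable def decayCentrality (n : ℕ) (i : Fin n) (z : Fin n → Fin 2) : ℝ :=
  ∑ j : Fin n,
    if j = i then ((z i : ℕ) : ℝ)
    else if z (max i j) = 1 then 1 / 2
    else if ∃ k : Fin n, max i j < k ∧ z k = 1 then 1 / 4
    else 0

/-- Pólya weight of a word with `a` ones and `b` zeros. -/
noncomputable def polyaW (R B Δ : ℝ) (a b : ℕ) : ℝ :=
  (∏ i ∈ Finset.range a, (R + i * Δ)) * (∏ j ∈ Finset.range b, (B + j * Δ)) /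
    ∏ m ∈ Finset.range (a + b), (R + B + m * Δ)

lemma polyaW_step (R B Δ : ℝ) (hR : 0 < R) (hB : 0 < B) (hΔ : 0 < Δ) (a b : ℕ) :
    polyaW R B Δ a (b + 1) + polyaW R B Δ (a + 1) b = polyaW R B Δ a b := by
  unfold polyaW
  have e1 : a + 1 + b = (a + b) + 1 := by ring
  have e2 : a + (b + 1) = (a + b) + 1 := by ring
  rw [e1, e2]
  simp only [Finset.prod_range_succ]
  have h1 : (∏ m ∈ Finset.range (a + b), (R + B + m * Δ)) ≠ 0 :=
    Finset.prod_ne_zero_iff.mpr (fun m _ => by positivity)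
  have h2 : R + B + ((a + b : ℕ) : ℝ) * Δ ≠ 0 := by positivity
  rw [← add_div, div_eq_div_iff (mul_ne_zero h1 h2) h1]
  push_cast
  ring

lemma polyaW_sum {α : Type*} [DecidableEq α] (R B Δ : ℝ) (hR : 0 < R) (hB : 0 < B)
    (hΔ : 0 < Δ) (U : Finset α) : ∀ a b : ℕ,
    ∑ T ∈ U.powerset, polyaW R B Δ (a + #T) (b + (#U - #T)) = polyaW R B Δ a b := by
  induction U using Finset.induction_on with
  | empty => intro a b; simp
  | insert x U hx ih =>
    intro a b
    rw [Finset.sum_powerset_insert hx, ← polyaW_step R B Δ hR hB hΔ a b,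
      ← ih a (b + 1), ← ih (a + 1) b]
    congr 1
    · refine Finset.sum_congr rfl fun T hT => ?_
      have := Finset.card_le_card (Finset.mem_powerset.mp hT)
      rw [Finset.card_insert_of_notMem hx]
      congr 1
      omega
    · refine Finset.sum_congr rfl fun T hT => ?_
      have := Finset.card_le_card (Finset.mem_powerset.mp hT)
      rw [Finset.card_insert_of_notMem hx,
        Finset.card_insert_of_notMem (fun h => hx (Finset.mem_powerset.mp hT h))]
      congr 1 <;> omega

lemma polyaP_eq (n : ℕ) (R B Δ : ℝ) (z : Fin n → Fin 2) :
    polyaP n R B Δ z = polyaW R B Δ #(univ.filter fun t => z t = 1)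
      (n - #(univ.filter fun t => z t = 1)) := by
  have h : ∑ t, (z t : ℕ) = #(univ.filter fun t => z t = 1) := by
    rw [Finset.card_filter]
    refine Finset.sum_congr rfl fun t _ => ?_
    generalize z t = y
    fin_cases y <;> simp
  have hle : #(univ.filter fun t => z t = 1) ≤ n := by
    simpa using Finset.card_le_univ (univ.filter fun t => z t = 1)
  unfold polyaP polyaW
  rw [h, Nat.add_sub_cancel' hle]

lemma polyaP_zeros (n : ℕ) (R B Δ : ℝ) (hR : 0 < R) (hB : 0 < B) (hΔ : 0 < Δ)
    (S : Finset (Fin n)) :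
    ∑ z : Fin n → Fin 2, polyaP n R B Δ z * (if ∀ k ∈ S, z k = 0 then 1 else 0) =
      ∏ s ∈ Finset.range #S, ((B + s * Δ) / (R + B + s * Δ)) := by
  have h := polyaW_sum R B Δ hR hB hΔ (Sᶜ) 0 #S
  have h0 : polyaW R B Δ 0 #S = ∏ s ∈ Finset.range #S, ((B + s * Δ) / (R + B + s * Δ)) := by
    unfold polyaW
    rw [Finset.prod_div_distrib]; simp
  rw [← h0, ← h]
  simp only [mul_ite, mul_one, mul_zero]
  rw [← Finset.sum_filter]
  have key : ∀ y : Fin 2, y = 0 ∨ y = 1 := by decide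
  refine Finset.sum_nbij' (fun z => univ.filter fun t => z t = 1)
    (fun T t => if t ∈ T then 1 else 0) ?_ ?_ ?_ ?_ ?_
  · intro z hz
    simp only [mem_filter, mem_univ, true_and] at hz
    simp only [mem_powerset]
    intro t ht
    simp only [mem_filter, mem_univ, true_and] at ht
    simp only [mem_compl]
    intro hS
    rw [hz t hS] at ht
    exact absurd ht (by decide)
  · intro T hT
    simp only [mem_filter, mem_univ, true_and]
    intro k hk
    rw [if_neg]
    intro hkT
    exact (mem_compl.mp (mem_powerset.mp hT hkT)) hk
  · intro z _
    funext t
    rcases key (z t) with h | h <;> simp [h]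
  · intro T _
    ext t
    simp
  · intro z hz
    simp only [mem_filter, mem_univ, true_and] at hz
    rw [polyaP_eq]
    have hsub : (univ.filter fun t => z t = 1) ⊆ Sᶜ := by
      intro t ht
      simp only [mem_filter, mem_univ, true_and] at ht
      simp only [mem_compl]
      intro hS
      rw [hz t hS] at ht
      exact absurd ht (by decide)
    have h1 := Finset.card_le_card hsub
    have h2 := Finset.card_add_card_compl S
    rw [Fintype.card_fin] at h2
    congr 1 <;> omega

/-- The expected decay centrality of node `V_i` under the Pólya joint law. -/
theorem polyaP_expected_decayCentrality (n : ℕ) (hn : 1 ≤ n) (R B Δ : ℝ)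
    (hR : 0 < R) (hB : 0 < B) (hΔ : 0 < Δ) (ρ δ : ℝ)
    (hρ : ρ = R / (R + B)) (hδ : δ = Δ / (R + B)) (i : Fin n) :
    ∑ z : Fin n → Fin 2, polyaP n R B Δ z * decayCentrality n i z =
      (∑ j ∈ Finset.univ.filter (fun j : Fin n => j ≠ i),
        (ρ / 4 + (1 / 4) *
          (1 - ∏ s ∈ Finset.range (n - (max i j : ℕ)), ((1 - ρ + s * δ) / (1 + s * δ))))) +
        ρ := by
  have hRB : R + B ≠ 0 := by positivity
  have key : ∀ y : Fin 2, y = 0 ∨ y = 1 := by decide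
  have hZ := polyaP_zeros n R B Δ hR hB hΔ
  have hfac : ∀ s : ℕ, (1 - ρ + s * δ) / (1 + s * δ) = (B + s * Δ) / (R + B + s * Δ) := by
    intro s
    have h2 : R + B + (s : ℝ) * Δ ≠ 0 := by positivity
    have h3 : 1 + (s : ℝ) * δ = (R + B + s * Δ) / (R + B) := by
      rw [hδ]; field_simp
    have h4 : 1 - ρ + (s : ℝ) * δ = (B + s * Δ) / (R + B) := by
      rw [hδ, hρ]; field_simp; ring
    rw [h3, h4, div_div_div_cancel_right₀ hRB]
  have hone : B / (R + B) = 1 - ρ := by rw [hρ]; field_simp; ring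
  have hE : ∑ z : Fin n → Fin 2, polyaP n R B Δ z = 1 := by simpa using hZ ∅
  have hS : ∀ m : Fin n, ∑ z : Fin n → Fin 2,
      polyaP n R B Δ z * (if z m = 0 then 1 else 0) = 1 - ρ := by
    intro m
    have := hZ {m}
    simp only [mem_singleton, forall_eq, card_singleton, prod_range_one, Nat.cast_zero,
      zero_mul, add_zero] at this
    rw [this, hone]
  have hI : ∀ m : Fin n, ∑ z : Fin n → Fin 2,
      polyaP n R B Δ z * (if ∀ k ∈ Finset.Ici m, z k = 0 then 1 else 0) =
      ∏ s ∈ Finset.range (n - (m : ℕ)), ((1 - ρ + s * δ) / (1 + s * δ)) := by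
    intro m
    rw [hZ (Finset.Ici m), Fin.card_Ici]
    exact Finset.prod_congr rfl fun s _ => (hfac s).symm
  unfold decayCentrality
  simp only [Finset.mul_sum]
  rw [Finset.sum_comm, ← Finset.sum_filter_add_sum_filter_not univ (fun j : Fin n => j ≠ i)]
  congr 1
  · refine Finset.sum_congr rfl fun j hj => ?_
    have hj : j ≠ i := by simpa using hj
    have hmax : max (i : ℕ) (j : ℕ) = ((max i j : Fin n) : ℕ) := by
      rcases le_total i j with h | h
      · rw [max_eq_right h, max_eq_right (Fin.le_def.mp h)]
      · rw [max_eq_left h, max_eq_left (Fin.le_def.mp h)]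
    rw [hmax, ← hI (max i j)]
    generalize max i j = m
    have hz : ∀ z : Fin n → Fin 2, polyaP n R B Δ z * (if j = i then ((z i : ℕ) : ℝ)
        else if z m = 1 then 1 / 2
        else if ∃ k : Fin n, m < k ∧ z k = 1 then 1 / 4
        else 0) = 1 / 2 * polyaP n R B Δ z
          - 1 / 4 * (polyaP n R B Δ z * (if z m = 0 then 1 else 0))
          - 1 / 4 * (polyaP n R B Δ z * (if ∀ k ∈ Finset.Ici m, z k = 0 then 1 else 0)) := by
      intro z
      rw [if_neg hj]
      rcases key (z m) with h | h
      · by_cases hex : ∃ k : Fin n, m < k ∧ z k = 1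
        · have hn' : ¬ ∀ k ∈ Finset.Ici m, z k = 0 := by
            intro hall
            obtain ⟨k, hk, hk1⟩ := hex
            rw [hall k (Finset.mem_Ici.mpr hk.le)] at hk1
            exact absurd hk1 (by decide)
          rw [if_neg (by rw [h]; decide), if_pos hex, if_pos h, if_neg hn']
          ring
        · have hall : ∀ k ∈ Finset.Ici m, z k = 0 := by
            intro k hk
            rcases (Finset.mem_Ici.mp hk).eq_or_lt with e | e
            · rw [← e]; exact h
            · rcases key (z k) with h' | h'
              · exact h'
              · exact absurd ⟨k, e, h'⟩ hex
          rw [if_neg (by rw [h]; decide), if_neg hex, if_pos h, if_pos hall]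
          ring
      · have h0 : ¬ z m = 0 := by rw [h]; decide
        have hn' : ¬ ∀ k ∈ Finset.Ici m, z k = 0 := fun hall =>
          h0 (hall m (Finset.mem_Ici.mpr le_rfl))
        rw [if_pos h, if_neg h0, if_neg hn']
        ring
    rw [Finset.sum_congr rfl fun z _ => hz z, Finset.sum_sub_distrib, Finset.sum_sub_distrib,
      ← Finset.mul_sum, ← Finset.mul_sum, ← Finset.mul_sum, hE, hS]
    ring
  · have hf : (univ.filter fun j : Fin n => ¬ j ≠ i) = {i} := by ext; simp
    rw [hf, Finset.sum_singleton]
    have hz : ∀ z : Fin n → Fin 2, polyaP n R B Δ z * (if i = i then ((z i : ℕ) : ℝ)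
        else if z (max i i) = 1 then 1 / 2
        else if ∃ k : Fin n, max i i < k ∧ z k = 1 then 1 / 4
        else 0) = polyaP n R B Δ z - polyaP n R B Δ z * (if z i = 0 then 1 else 0) := by
      intro z
      rw [if_pos rfl]
      rcases key (z i) with h | h <;> simp [h]
    rw [Finset.sum_congr rfl fun z _ => hz z, Finset.sum_sub_distrib, hE, hS]
    ring
end

section
/- Let z ∈ {0,1}^n, let A be the n×n real matrix with A_{ij} = z_{max(i,j)}, let D be the diagonal matrix with D_{ii} = deg_i(z) = i·z_i + Σ_{j=i+1}^n z_j, and let L = D − A. Then L·u_1 = 0 for u_1 = (1,1,…,1)ᵀ, and for every m ∈ {2,…,n}, L·u_m = deg_m(z)·u_m, where u_m = (1,…,1, −(m−1), 0,…,0)ᵀ has its first m−1 entries equal to 1, its m-th entry equal to −(m−1), and its remaining entries equal to 0. -/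
open Finset

/-- Adjacency matrix of the threshold graph of `z`: `A_{ij} = z_{max(i,j)}`. -/
def adjMatrix (n : ℕ) (z : Fin n → Fin 2) : Matrix (Fin n) (Fin n) ℝ :=
  Matrix.of fun i j => ((z (max i j) : ℕ) : ℝ)

/-- Laplacian matrix `L = D − A` of the threshold graph of `z`. -/
def lapMatrix (n : ℕ) (z : Fin n → Fin 2) : Matrix (Fin n) (Fin n) ℝ :=
  Matrix.diagonal (fun i => (degNode n i z : ℝ)) - adjMatrix n z

/-- The eigenvector `u_m` (for `m : Fin n` with `(m : ℕ) ≥ 1`, i.e. paper's `m+1 ≥ 2`):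
first `m` entries `1`, the `m`-th entry `−m`, remaining entries `0`. -/
def uVec (n : ℕ) (m : Fin n) : Fin n → ℝ :=
  fun i => if i < m then 1 else if i = m then -((m : ℕ) : ℝ) else 0

theorem sum_lt_const (n : ℕ) (m : Fin n) (c : ℝ) :
    ∑ j : Fin n, (if j < m then c else 0) = (m : ℕ) * c := by
  rw [← Finset.sum_filter, Finset.sum_const]
  have h : (Finset.univ.filter (fun j : Fin n => j < m)) = Finset.Iio m := by
    ext j; simp
  rw [h, Fin.card_Iio, nsmul_eq_mul]

theorem degNode_cast (n : ℕ) (z : Fin n → Fin 2) (i : Fin n) :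
    (degNode n i z : ℝ) = ((i : ℕ) + 1) * ((z i : ℕ) : ℝ)
      + ∑ j : Fin n, (if i < j then ((z j : ℕ) : ℝ) else 0) := by
  unfold degNode
  rw [← Finset.sum_filter]
  push_cast
  rfl

theorem row_sum (n : ℕ) (z : Fin n → Fin 2) (i : Fin n) :
    ∑ j : Fin n, ((z (max i j) : ℕ) : ℝ) = degNode n i z := by
  have h : ∀ j : Fin n, ((z (max i j) : ℕ) : ℝ) =
      (if j < i then ((z i : ℕ) : ℝ) else 0) + (if j = i then ((z i : ℕ) : ℝ) else 0)
        + (if i < j then ((z j : ℕ) : ℝ) else 0) := by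
    intro j
    rcases lt_trichotomy j i with h | h | h
    · simp [h, h.ne, h.le, h.not_gt]
    · simp [h]
    · simp [h, h.ne', h.le, h.not_gt]
  rw [Finset.sum_congr rfl (fun j _ => h j), Finset.sum_add_distrib, Finset.sum_add_distrib,
    sum_lt_const, degNode_cast]
  simp
  ring

theorem sum_uVec (n : ℕ) (m : Fin n) : ∑ j : Fin n, uVec n m j = 0 := by
  have h : ∀ j : Fin n, uVec n m j =
      (if j < m then (1 : ℝ) else 0) + (if j = m then -((m : ℕ) : ℝ) else 0) := by
    intro j
    unfold uVec
    rcases lt_trichotomy j m with h | h | h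
    · simp [h, h.ne]
    · simp [h]
    · simp [h.ne', h.not_gt]
  rw [Finset.sum_congr rfl (fun j _ => h j), Finset.sum_add_distrib, sum_lt_const]
  simp

theorem lap_apply (n : ℕ) (z : Fin n → Fin 2) (v : Fin n → ℝ) (i : Fin n) :
    (lapMatrix n z).mulVec v i =
      (degNode n i z : ℝ) * v i - ∑ j : Fin n, ((z (max i j) : ℕ) : ℝ) * v j := by
  unfold lapMatrix
  rw [Matrix.sub_mulVec, Pi.sub_apply, Matrix.mulVec_diagonal]
  rfl

theorem sum_row_uVec (n : ℕ) (z : Fin n → Fin 2) (m i : Fin n) (him : i < m) :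
    ∑ j : Fin n, ((z (max i j) : ℕ) : ℝ) * uVec n m j = degNode n i z - degNode n m z := by
  have h : ∀ j : Fin n, ((z (max i j) : ℕ) : ℝ) * uVec n m j =
      ((z (max i j) : ℕ) : ℝ) - ((if j = m then ((m : ℕ) + 1) * ((z m : ℕ) : ℝ) else 0)
        + (if m < j then ((z j : ℕ) : ℝ) else 0)) := by
    intro j
    unfold uVec
    rcases lt_trichotomy j m with h | h | h
    · simp [h, h.ne, h.not_gt]
    · subst h
      simp [him.le]
      ring
    · simp [h, h.ne', h.not_gt, (him.trans h).le]
  rw [Finset.sum_congr rfl (fun j _ => h j), Finset.sum_sub_distrib, Finset.sum_add_distrib,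
    row_sum, degNode_cast n z m]
  simp

/-- The all-ones vector is a `0`-eigenvector of the Laplacian, and each `u_m`
(for paper index `m ≥ 2`) is an eigenvector with eigenvalue `deg_m(z)`. -/
theorem lapMatrix_eigenvectors (n : ℕ) (z : Fin n → Fin 2) :
    (lapMatrix n z).mulVec (fun _ => 1) = 0 ∧
      ∀ m : Fin n, 1 ≤ (m : ℕ) →
        (lapMatrix n z).mulVec (uVec n m) = (degNode n m z : ℝ) • uVec n m := by
  refine ⟨?_, ?_⟩
  · funext i
    rw [lap_apply]
    simp [row_sum]
  · intro m _
    funext i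
    rw [lap_apply, Pi.smul_apply, smul_eq_mul]
    rcases lt_or_ge i m with him | him
    · rw [sum_row_uVec n z m i him]
      simp [uVec, him]
    · have h : ∀ j : Fin n, ((z (max i j) : ℕ) : ℝ) * uVec n m j =
          ((z i : ℕ) : ℝ) * uVec n m j := by
        intro j
        rcases le_or_gt j m with hj | hj
        · rw [max_eq_left (hj.trans him)]
        · simp [uVec, hj.not_gt, hj.ne']
      rw [Finset.sum_congr rfl (fun j _ => h j), ← Finset.mul_sum, sum_uVec]
      rcases him.eq_or_lt with h | h
      · subst h; simp
      · simp [uVec, h.not_gt, h.ne']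
end

section
/- Let z ∈ {0,1}^n with z_n = 1, and let W be the associated averaging matrix. Then every diagonal entry of W is strictly positive, and every entry of W² is strictly positive; in particular W is irreducible and aperiodic. -/
open Finset

/-- `N_i = 1 + Σ_{j ≠ i} z_{max(i,j)}`, the number of neighbors of node `i` plus one. -/
def Nval (n : ℕ) (z : Fin n → Fin 2) (i : Fin n) : ℝ :=
  1 + ∑ j ∈ Finset.univ.filter (fun j => j ≠ i), ((z (max i j) : ℕ) : ℝ)

/-- The averaging matrix `W_{ij} = (1{i=j} + 1{i≠j}·z_{max(i,j)}) / N_i`. -/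
noncomputable def Wmat (n : ℕ) (z : Fin n → Fin 2) : Matrix (Fin n) (Fin n) ℝ :=
  Matrix.of fun i j =>
    ((if i = j then 1 else ((z (max i j) : ℕ) : ℝ)) / Nval n z i)

theorem Nval_pos_aux (n : ℕ) (z : Fin n → Fin 2) (i : Fin n) : 0 < Nval n z i := by
  unfold Nval
  positivity

theorem Wmat_nonneg_aux (n : ℕ) (z : Fin n → Fin 2) (i j : Fin n) : 0 ≤ Wmat n z i j := by
  have := Nval_pos_aux n z i
  simp only [Wmat, Matrix.of_apply]
  split_ifs <;> positivity

theorem Wmat_pos_aux (n : ℕ) (z : Fin n → Fin 2) (i j : Fin n)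
    (h : i = j ∨ z (max i j) = 1) : 0 < Wmat n z i j := by
  have := Nval_pos_aux n z i
  simp only [Wmat, Matrix.of_apply]
  split_ifs with hij
  · positivity
  · have h1 := h.resolve_left hij
    rw [h1]
    simpa using this

/-- If the last node is universal, every diagonal entry of `W` is strictly positive and
every entry of `W²` is strictly positive; in particular `W` is irreducible and aperiodic. -/
theorem Wmat_irreducible_aperiodic (n : ℕ) (hn : 0 < n) (z : Fin n → Fin 2)
    (hz : z ⟨n - 1, Nat.sub_lt hn Nat.one_pos⟩ = 1) :
    (∀ i : Fin n, 0 < Wmat n z i i) ∧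
      (∀ i j : Fin n, 0 < (Wmat n z * Wmat n z) i j) := by
  refine ⟨fun i => Wmat_pos_aux n z i i (Or.inl rfl), fun i j => ?_⟩
  rw [Matrix.mul_apply]
  have hle : ∀ k : Fin n, k ≤ ⟨n - 1, Nat.sub_lt hn Nat.one_pos⟩ := by
    intro k
    rw [Fin.le_def]
    have := k.isLt
    simp only
    omega
  refine Finset.sum_pos'
    (fun k _ => mul_nonneg (Wmat_nonneg_aux n z i k) (Wmat_nonneg_aux n z k j))
    ⟨⟨n - 1, Nat.sub_lt hn Nat.one_pos⟩, Finset.mem_univ _, mul_pos ?_ ?_⟩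
  · apply Wmat_pos_aux
    right
    rw [max_eq_right (hle i), hz]
  · apply Wmat_pos_aux
    right
    rw [max_eq_left (hle j), hz]
end

section
/- Let z ∈ {0,1}^n with z_n = 1, let W be the associated averaging matrix, and define the row vector π* by π*_i = N_i / Σ_{k=1}^{n} N_k. Then the detailed balance condition N_i·W_{ij} = N_j·W_{ji} holds for all i, j ∈ {1,…,n}, and π* is a stationary distribution of W: π*·W = π* and Σ_{i=1}^{n} π*_i = 1. -/
open Finset

/-- Detailed balance `N_i W_{ij} = N_j W_{ji}`, and `π*_i = N_i / Σ_k N_k` is a stationary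
distribution of `W`: `π* W = π*` and `Σ_i π*_i = 1`. -/
theorem Wmat_stationary (n : ℕ) (hn : 0 < n) (z : Fin n → Fin 2)
    (hz : z ⟨n - 1, Nat.sub_lt hn Nat.one_pos⟩ = 1) :
    (∀ i j : Fin n, Nval n z i * Wmat n z i j = Nval n z j * Wmat n z j i) ∧
      (∀ j : Fin n,
        ∑ i : Fin n, (Nval n z i / ∑ k : Fin n, Nval n z k) * Wmat n z i j =
          Nval n z j / ∑ k : Fin n, Nval n z k) ∧
      (∑ i : Fin n, Nval n z i / ∑ k : Fin n, Nval n z k = 1) := by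
  have hpos : ∀ i, 0 < Nval n z i := fun i => by
    unfold Nval
    have : 0 ≤ ∑ j ∈ Finset.univ.filter (fun j => j ≠ i), ((z (max i j) : ℕ) : ℝ) :=
      Finset.sum_nonneg fun _ _ => Nat.cast_nonneg _
    linarith
  have hNW : ∀ i j, Nval n z i * Wmat n z i j =
      if i = j then 1 else ((z (max i j) : ℕ) : ℝ) := fun i j => by
    simp only [Wmat, Matrix.of_apply]
    exact mul_div_cancel₀ _ (hpos i).ne'
  have hdb : ∀ i j : Fin n, Nval n z i * Wmat n z i j = Nval n z j * Wmat n z j i := by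
    intro i j
    rw [hNW, hNW, max_comm]
    simp only [eq_comm]
  have hrow : ∀ j, ∑ i, Nval n z j * Wmat n z j i = Nval n z j := by
    intro j
    simp only [hNW]
    rw [← Finset.add_sum_erase _ _ (Finset.mem_univ j), if_pos rfl]
    unfold Nval
    congr 1
    rw [Finset.filter_ne']
    refine Finset.sum_congr rfl fun i hi => ?_
    rw [if_neg (Finset.ne_of_mem_erase hi).symm]
  have hS : 0 < ∑ k : Fin n, Nval n z k :=
    Finset.sum_pos (fun i _ => hpos i) ⟨⟨0, hn⟩, Finset.mem_univ _⟩
  refine ⟨hdb, fun j => ?_, ?_⟩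
  · simp only [div_mul_eq_mul_div]
    rw [← Finset.sum_div]
    congr 1
    refine Eq.trans ?_ (hrow j)
    exact Finset.sum_congr rfl fun i _ => hdb i j
  · rw [← Finset.sum_div]
    exact div_self hS.ne'
end
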